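/- Gauss–Laguerre cubature for the Laguerre unitary ensemble: for α > −1 and every f ∈ ℙ^{(2m+1,n)}, (1/n!) ∫_0^∞⋯∫_0^∞ f(x) Π_{j=1}^n x_j^α e^{−x_j} Π_{1≤j<k≤n}(x_j−x_k)² dx_1⋯dx_n = Σ_{λ̂ ∈ Λ^{(m,n)}} f(x_λ̂^{(m,n)}) W_λ̂, where W_λ̂ = (m+n)^{−n} Π_{j=1}^n (x^{(m+n)}_{λ̂_j+n−j})^{−1} (ℓ^{(α+1)}_{m+n−1}(x^{(m+n)}_{λ̂_j+n−j}))^{−2} · Π_{1≤j<k≤n}(x^{(m+n)}_{λ̂_j+n−j} − x^{(m+n)}_{λ̂_k+n−k})². -/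

import Mathlib

open MeasureTheory Real Finset

noncomputable section

/-- Vandermonde product `∏_{j<k} (x_j - x_k)`. -/
def vand (n : ℕ) (x : Fin n → ℝ) : ℝ :=
  ∏ j : Fin n, ∏ k ∈ Finset.univ.filter (fun k => j < k), (x j - x k)

/-- The fundamental alcove `Λ^{(m,n)}` : decreasing sequences with entries ≤ m. -/
def Lam (m n : ℕ) : Finset (Fin n → ℕ) :=
  (Fintype.piFinset fun _ => Finset.range (m + 1)).filter
    fun lam => ∀ i j : Fin n, i ≤ j → lam j ≤ lam i

/-- The node `x^{(m,n)}_λ̂` with `j`-th component `x^{(m+n)}_{λ̂_j + n - j}`. -/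
def node (n : ℕ) (xr : ℕ → ℝ) (lh : Fin n → ℕ) : Fin n → ℝ :=
  fun j => xr (lh j + (n - 1 - (j : ℕ)))

/-- The symmetric monomial `M_λ(x)`. -/
def msym (n : ℕ) (lam : Fin n → ℕ) : (Fin n → ℝ) → ℝ := fun x =>
  ∑ mu ∈ Finset.univ.image (fun σ : Equiv.Perm (Fin n) => lam ∘ σ), ∏ j : Fin n, x j ^ mu j

/-- The space `ℙ^{(m,n)}`: span of the symmetric monomials `M_λ`, `λ ∈ Λ^{(m,n)}`. -/
def pSpace (m n : ℕ) : Submodule ℝ ((Fin n → ℝ) → ℝ) :=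
  Submodule.span ℝ (msym n '' (Lam m n : Set (Fin n → ℕ)))

/-!
Multiplied by `vand² = det(x_i^j)²`, a function in `ℙ^{(2m+1,n)}` is a polynomial of degree at most
`2(m+n) - 1` in each variable, so the `n`-fold tensor power of the one-variable Gauss quadrature at
the `m + n` roots integrates it exactly. The summand of the tensor rule is symmetric in the node
indices and vanishes when two of them coincide; hence it is `n!` times the sum over strictly
decreasing index sequences, and these are exactly `λ̂ + (n-1, …, 1, 0)` with `λ̂ ∈ Λ^{(m,n)}`.

The Gauss weight at a root `v` is the integral `W` of the Lagrange basis polynomial `b`, whose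
leading coefficient is `A / p'(v)`, where `A` is that of `p = ℓ^{(α)}_{m+n}`. Integration by parts
gives `∫ p' r x^{α+1} e^{-x} = r_{m+n-1} / A` for `deg r < m + n`. Taking `r = b` yields
`W v p'(v)² = 1`; comparing with the pairing of `q = ℓ^{(α+1)}_{m+n-1}` with `b` and with `p'`
yields `p'(v)² = (m + n) q(v)²`.
-/

section OrthogonalPolynomials

open Polynomial

variable {K : Type*} [Field K] {I : K[X] →ₗ[K] K} {p r : K[X]}

/-- `p` is an orthogonal polynomial for the linear functional `I`: the bilinear form
`(p, r) ↦ I (p * r)` pairs it to zero with every polynomial of smaller degree. -/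
structure IsOrthogonalPoly (I : K[X] →ₗ[K] K) (p : K[X]) : Prop where
  apply_mul_eq_zero : ∀ r : K[X], r.degree < p.degree → I (p * r) = 0

/-- `p` is an orthonormal polynomial for the linear functional `I`. No sign is imposed on the
leading coefficient, so `-p` is then orthonormal as well. -/
structure IsOrthonormalPoly (I : K[X] →ₗ[K] K) (p : K[X]) : Prop extends IsOrthogonalPoly I p where
  apply_mul_self : I (p * p) = 1

theorem isOrthonormalPoly_of_sequence {p : ℕ → K[X]} (hdeg : ∀ l, (p l).degree = l)
    (horth : ∀ l k, I (p l * p k) = if l = k then 1 else 0) (l : ℕ) :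
    IsOrthonormalPoly I (p l) := by
  refine ⟨⟨fun r hr => ?_⟩, by simp [horth]⟩
  let S : Polynomial.Sequence K := ⟨p, hdeg⟩
  have hr_span : r ∈ Submodule.span K (S '' Set.Iio l) := by
    rw [S.span_degreeLT fun i _ => (leadingCoeff_ne_zero.mpr (S.ne_zero i)).isUnit, mem_degreeLT,
      ← hdeg l]
    exact hr
  have hspan_le : Submodule.span K (S '' Set.Iio l) ≤
      LinearMap.ker (I ∘ₗ LinearMap.mulLeft K (p l)) := by
    rw [Submodule.span_le]
    rintro _ ⟨k, hk, rfl⟩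
    exact (horth l k).trans (if_neg (ne_of_gt hk))
  exact hspan_le hr_span

namespace IsOrthonormalPoly

theorem ne_zero (hp : IsOrthonormalPoly I p) : p ≠ 0 := by
  rintro rfl
  simpa using hp.apply_mul_self

theorem apply_mul_eq_coeff_div (hp : IsOrthonormalPoly I p) (hr : r.degree ≤ p.degree) :
    I (p * r) = r.coeff p.natDegree / p.leadingCoeff := by
  set c := r.coeff p.natDegree / p.leadingCoeff with hc
  have hlead : p.leadingCoeff ≠ 0 := leadingCoeff_ne_zero.mpr hp.ne_zero
  have hlower : (r - C c * p).degree < p.degree := by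
    rw [degree_eq_natDegree hp.ne_zero] at hr ⊢
    have hle : (r - C c * p).degree ≤ p.natDegree :=
      (degree_sub_le _ _).trans <| max_le hr <| smul_eq_C_mul (p := p) c ▸
        (degree_smul_le c p).trans degree_le_natDegree
    have hcoeff : (r - C c * p).coeff p.natDegree = 0 := by
      rw [coeff_sub, coeff_C_mul, coeff_natDegree, hc, div_mul_cancel₀ _ hlead, sub_self]
    exact hle.lt_of_ne fun h => coeff_ne_zero_of_eq_degree h hcoeff
  calc I (p * r) = I (p * (r - C c * p)) + c * I (p * p) := by
        rw [← smul_eq_mul (a := c), ← map_smul, ← map_add, smul_eq_C_mul]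
        ring_nf
    _ = c := by rw [hp.apply_mul_eq_zero _ hlower, hp.apply_mul_self, zero_add, mul_one]

end IsOrthonormalPoly

section Quadrature

variable {ι : Type*} {s : Finset ι} {v : ι → K} {i : ι}

/-- The points `v i`, `i ∈ s`, are distinct roots of `p`, and they are as many as the degree of
`p`: the nodes of the Gauss quadrature rule when `p` is an orthogonal polynomial. -/
structure EnumeratesRoots (p : K[X]) (s : Finset ι) (v : ι → K) : Prop where
  injOn : Set.InjOn v s
  degree_eq : p.degree = #s
  eval_eq_zero : ∀ i ∈ s, p.eval (v i) = 0

namespace EnumeratesRoots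

theorem ne_zero (h : EnumeratesRoots p s v) : p ≠ 0 := by
  rintro rfl
  simpa using h.degree_eq

theorem eq_C_leadingCoeff_mul_nodal (h : EnumeratesRoots p s v) :
    p = C p.leadingCoeff * Lagrange.nodal s v := by
  have hlead : p.leadingCoeff ≠ 0 := leadingCoeff_ne_zero.mpr h.ne_zero
  apply Polynomial.eq_of_degree_le_of_eval_index_eq s h.injOn h.degree_eq.le
  · rw [degree_C_mul hlead, Lagrange.degree_nodal, h.degree_eq]
  · rw [leadingCoeff_C_mul_of_isUnit hlead.isUnit, Lagrange.nodal_monic.leadingCoeff, mul_one]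
  · intro i hi
    rw [h.eval_eq_zero i hi, eval_mul, Lagrange.eval_nodal_at_node hi, mul_zero]

variable [DecidableEq ι]

theorem degree_basis (h : EnumeratesRoots p s v) (hi : i ∈ s) {M : ℕ}
    (hpdeg : p.degree = (M + 1 : ℕ)) : (Lagrange.basis s v i).degree = M := by
  have hcard : #s = M + 1 := by exact_mod_cast h.degree_eq.symm.trans hpdeg
  rw [Lagrange.degree_basis h.injOn hi, hcard, Nat.add_sub_cancel]

theorem leadingCoeff_basis_mul_eval_derivative (h : EnumeratesRoots p s v) (hi : i ∈ s) :
    (Lagrange.basis s v i).leadingCoeff * (derivative p).eval (v i) = p.leadingCoeff := by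
  have hweight : (Lagrange.basis s v i).leadingCoeff = Lagrange.nodalWeight s v i := by
    rw [Lagrange.leadingCoeff_basis h.injOn hi, Lagrange.nodalWeight, Finset.prod_inv_distrib]
  have hderiv : (derivative p).eval (v i) = p.leadingCoeff * (Lagrange.nodalWeight s v i)⁻¹ := by
    conv_lhs => rw [h.eq_C_leadingCoeff_mul_nodal]
    rw [derivative_C_mul, eval_C_mul, Lagrange.nodalWeight_eq_eval_derivative_nodal hi, inv_inv]
  rw [hweight, hderiv, mul_left_comm,
    mul_inv_cancel₀ (Lagrange.nodalWeight_ne_zero h.injOn hi), mul_one]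

end EnumeratesRoots

namespace IsOrthogonalPoly

variable [DecidableEq ι]

theorem apply_eq_sum_eval_mul_basis (hp : IsOrthogonalPoly I p) (hroots : EnumeratesRoots p s v)
    {f : K[X]} (hf : f.degree < (2 * #s : ℕ)) :
    I f = ∑ i ∈ s, f.eval (v i) * I (Lagrange.basis s v i) := by
  have hdivmod : p * (f / p) + f % p = f := EuclideanDomain.div_add_mod f p
  have hmod : (f % p).degree < #s := hroots.degree_eq ▸ degree_mod_lt f hroots.ne_zero
  have hquot : (f / p).degree < p.degree := by
    have hmul : p.degree + (f / p).degree < p.degree + p.degree := by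
      rw [← degree_mul, eq_sub_of_add_eq hdivmod, hroots.degree_eq, ← Nat.cast_add, ← two_mul]
      refine (degree_sub_le _ _).trans_lt (max_lt hf (hmod.trans_le ?_))
      exact_mod_cast Nat.le_mul_of_pos_left _ two_pos
    exact (WithBot.add_lt_add_iff_left (degree_ne_bot.mpr hroots.ne_zero)).mp hmul
  have hinterp : f % p = Lagrange.interpolate s v fun i => f.eval (v i) := by
    refine Lagrange.eq_interpolate_of_eval_eq _ hroots.injOn hmod fun i hi => ?_
    conv_rhs => rw [← hdivmod]
    rw [eval_add, eval_mul, hroots.eval_eq_zero i hi, zero_mul, zero_add]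
  calc I f = I (f % p) := by
        conv_lhs => rw [← hdivmod]
        rw [map_add, hp.apply_mul_eq_zero _ hquot, zero_add]
    _ = ∑ i ∈ s, f.eval (v i) * I (Lagrange.basis s v i) := by
        simp only [hinterp, Lagrange.interpolate_apply, map_sum, ← smul_eq_C_mul, map_smul,
          smul_eq_mul]

theorem apply_mul_basis (hp : IsOrthogonalPoly I p) (hroots : EnumeratesRoots p s v) (hi : i ∈ s)
    {f : K[X]} (hf : f.degree ≤ (#s : ℕ)) :
    I (f * Lagrange.basis s v i) = f.eval (v i) * I (Lagrange.basis s v i) := by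
  have hdeg : (f * Lagrange.basis s v i).degree < (2 * #s : ℕ) := by
    have hpos : 0 < #s := Finset.card_pos.mpr ⟨i, hi⟩
    rw [degree_mul, Lagrange.degree_basis hroots.injOn hi]
    calc f.degree + ((#s - 1 : ℕ) : WithBot ℕ) ≤ (#s : WithBot ℕ) + (#s - 1 : ℕ) := by gcongr
      _ < (2 * #s : ℕ) := by exact_mod_cast (by omega : #s + (#s - 1) < 2 * #s)
  rw [hp.apply_eq_sum_eval_mul_basis hroots hdeg, Finset.sum_eq_single i]
  · rw [eval_mul, Lagrange.eval_basis_self hroots.injOn hi, mul_one]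
  · intro j hj hji
    rw [eval_mul, Lagrange.eval_basis_of_ne hji.symm hj, mul_zero, zero_mul]
  · exact fun h => absurd hi h

end IsOrthogonalPoly

end Quadrature

end OrthogonalPolynomials

section MomentFunctional

open Polynomial

variable {μ : Measure ℝ} {w : ℝ → ℝ}

theorem integrable_eval_mul_of_integrable_pow_mul
    (hw : ∀ k : ℕ, Integrable (fun x => x ^ k * w x) μ) (P : ℝ[X]) :
    Integrable (fun x => P.eval x * w x) μ := by
  simp only [eval_eq_sum_range, Finset.sum_mul, mul_assoc]
  exact integrable_finsetSum _ fun k _ => (hw k).const_mul _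

/-- The functional `P ↦ ∫ P w dμ` on polynomials, for a weight `w` with finite moments. -/
def momentFunctional (hw : ∀ k : ℕ, Integrable (fun x => x ^ k * w x) μ) : ℝ[X] →ₗ[ℝ] ℝ where
  toFun P := ∫ x, P.eval x * w x ∂μ
  map_add' P Q := by
    simp only [eval_add, add_mul]
    exact integral_add (integrable_eval_mul_of_integrable_pow_mul hw P)
      (integrable_eval_mul_of_integrable_pow_mul hw Q)
  map_smul' c P := by
    simp only [eval_smul, smul_eq_mul, mul_assoc, RingHom.id_apply]
    exact integral_const_mul c _

end MomentFunctional

section Laguerre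

open Polynomial

variable {a : ℝ}

/-- The Laguerre weight `x ^ a * exp (-x)`, to be integrated over `(0, ∞)`. -/
def laguerreWeight (a x : ℝ) : ℝ := x ^ a * Real.exp (-x)

theorem pow_mul_laguerreWeight (a : ℝ) (k : ℕ) {x : ℝ} (hx : 0 < x) :
    x ^ k * laguerreWeight a x = Real.exp (-x) * x ^ (a + 1 + k - 1) := by
  rw [laguerreWeight, show a + 1 + k - 1 = a + k by ring, Real.rpow_add hx, Real.rpow_natCast]
  ring

theorem integrableOn_pow_mul_laguerreWeight (ha : -1 < a) (k : ℕ) :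
    IntegrableOn (fun x => x ^ k * laguerreWeight a x) (Set.Ioi 0) :=
  (Real.GammaIntegral_convergent (by positivity [neg_lt_iff_pos_add.mp ha])).congr_fun
    (fun _ hx => (pow_mul_laguerreWeight a k hx).symm) measurableSet_Ioi

/-- The functional `P ↦ ∫₀^∞ P(x) x ^ a e ^ (-x) dx` for which the Laguerre polynomials of
parameter `a` are orthogonal. -/
def laguerreFunctional (ha : -1 < a) : ℝ[X] →ₗ[ℝ] ℝ :=
  momentFunctional (integrableOn_pow_mul_laguerreWeight ha)

theorem laguerreFunctional_apply (ha : -1 < a) (P : ℝ[X]) :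
    laguerreFunctional ha P = ∫ x in Set.Ioi 0, P.eval x * laguerreWeight a x :=
  rfl

theorem laguerreFunctional_monomial (ha : -1 < a) (k : ℕ) (c : ℝ) :
    laguerreFunctional ha (monomial k c) = c * Real.Gamma (a + 1 + k) := by
  have hpos : 0 < a + 1 + k := by positivity [neg_lt_iff_pos_add.mp ha]
  rw [laguerreFunctional_apply, Real.Gamma_eq_integral hpos, ← integral_const_mul]
  refine setIntegral_congr_fun measurableSet_Ioi fun x hx => ?_
  simp only [eval_monomial, mul_assoc, pow_mul_laguerreWeight a k hx]

theorem neg_one_lt_add_one (ha : -1 < a) : -1 < a + 1 :=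
  ha.trans (lt_add_one a)

theorem laguerreFunctional_X_mul (ha : -1 < a) (r : ℝ[X]) :
    laguerreFunctional ha (X * r) = laguerreFunctional (neg_one_lt_add_one ha) r := by
  simp only [laguerreFunctional_apply, laguerreWeight]
  refine setIntegral_congr_fun measurableSet_Ioi fun x (hx : 0 < x) => ?_
  simp only [eval_mul, eval_X, Real.rpow_add_one hx.ne']
  ring

-- Integration by parts against `x ^ (a + 1) * exp (-x)`; on monomials it is `Γ (s + 1) = s Γ s`.
theorem laguerreFunctional_X_mul_derivative (ha : -1 < a) (r : ℝ[X]) :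
    laguerreFunctional ha (X * derivative r) =
      laguerreFunctional ha (X * r) - (a + 1) * laguerreFunctional ha r := by
  induction r using Polynomial.induction_on' with
  | add P Q hP hQ =>
    simp only [mul_add, map_add, hP, hQ]
    ring
  | monomial k c =>
    have hne : a + 1 + k ≠ 0 := by positivity [neg_lt_iff_pos_add.mp ha]
    have hderiv : X * derivative (monomial k c) = monomial k (c * k) := by
      cases k <;> simp [X_mul_monomial]
    simp only [hderiv, X_mul_monomial, laguerreFunctional_monomial]
    push_cast
    rw [← add_assoc, Real.Gamma_add_one hne]
    ring

variable {ha : -1 < a} {p q r : ℝ[X]} {M : ℕ}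

theorem degree_derivative_le_of_degree_eq_succ (hpdeg : p.degree = (M + 1 : ℕ)) :
    (derivative p).degree ≤ M :=
  degree_le_of_natDegree_le <|
    (natDegree_derivative_le p).trans_eq (by rw [natDegree_eq_of_degree_eq_some hpdeg]; rfl)

theorem laguerreFunctional_derivative_mul (hp : IsOrthonormalPoly (laguerreFunctional ha) p)
    (hpdeg : p.degree = (M + 1 : ℕ)) (hr : r.degree ≤ M) :
    laguerreFunctional (neg_one_lt_add_one ha) (derivative p * r) =
      r.coeff M / p.leadingCoeff := by
  have hr_lt : r.degree < p.degree := hpdeg ▸ hr.trans_lt (by exact_mod_cast M.lt_succ_self)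
  have hXr : (X * r).degree ≤ p.degree := by
    rw [degree_mul, degree_X, hpdeg, Nat.cast_succ, add_comm]
    gcongr
  have hXr' : (X * derivative r).degree < p.degree := by
    rw [hpdeg, degree_lt_iff_coeff_zero] at hr_lt ⊢
    rintro (_ | k) hk
    · simp
    · rw [coeff_X_mul, coeff_derivative, hr_lt _ hk, zero_mul]
  calc laguerreFunctional (neg_one_lt_add_one ha) (derivative p * r)
      = laguerreFunctional ha (X * derivative (p * r)) -
          laguerreFunctional ha (p * (X * derivative r)) := by
        rw [← laguerreFunctional_X_mul ha, ← map_sub, derivative_mul]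
        ring_nf
    _ = laguerreFunctional ha (p * (X * r)) := by
        rw [laguerreFunctional_X_mul_derivative, hp.apply_mul_eq_zero _ hr_lt,
          hp.apply_mul_eq_zero _ hXr', mul_left_comm X]
        ring
    _ = r.coeff M / p.leadingCoeff := by
        rw [hp.apply_mul_eq_coeff_div hXr, natDegree_eq_of_degree_eq_some hpdeg, coeff_X_mul]

theorem sq_leadingCoeff_of_isOrthonormalPoly_laguerreFunctional
    (hp : IsOrthonormalPoly (laguerreFunctional ha) p) (hpdeg : p.degree = (M + 1 : ℕ))
    (hq : IsOrthonormalPoly (laguerreFunctional (neg_one_lt_add_one ha)) q) (hqdeg : q.degree = M) :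
    q.leadingCoeff ^ 2 = (M + 1) * p.leadingCoeff ^ 2 := by
  have hp0 : p.leadingCoeff ≠ 0 := leadingCoeff_ne_zero.mpr hp.ne_zero
  have hq0 : q.leadingCoeff ≠ 0 := leadingCoeff_ne_zero.mpr hq.ne_zero
  have hqnat : q.natDegree = M := natDegree_eq_of_degree_eq_some hqdeg
  have hp'deg : (derivative p).degree ≤ q.degree :=
    hqdeg ▸ degree_derivative_le_of_degree_eq_succ hpdeg
  have hp'coeff : (derivative p).coeff M = p.leadingCoeff * (M + 1) := by
    rw [coeff_derivative, leadingCoeff, natDegree_eq_of_degree_eq_some hpdeg]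
  have hpair : q.leadingCoeff / p.leadingCoeff = p.leadingCoeff * (M + 1) / q.leadingCoeff :=
    calc q.leadingCoeff / p.leadingCoeff
        = laguerreFunctional (neg_one_lt_add_one ha) (derivative p * q) := by
          rw [laguerreFunctional_derivative_mul hp hpdeg hqdeg.le, leadingCoeff, hqnat]
      _ = p.leadingCoeff * (M + 1) / q.leadingCoeff := by
          rw [mul_comm, hq.apply_mul_eq_coeff_div hp'deg, hqnat, hp'coeff]
  rw [div_eq_div_iff hp0 hq0] at hpair
  linear_combination hpair

theorem isOrthonormalPoly_laguerreFunctional_of_sequence (ha : -1 < a) {p : ℕ → ℝ[X]}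
    (hdeg : ∀ l, (p l).degree = l)
    (horth : ∀ l k, ∫ x in Set.Ioi (0 : ℝ), (p l).eval x * (p k).eval x * laguerreWeight a x =
      if l = k then 1 else 0) (l : ℕ) :
    IsOrthonormalPoly (laguerreFunctional ha) (p l) :=
  isOrthonormalPoly_of_sequence hdeg
    (fun l k => by simpa only [laguerreFunctional_apply, eval_mul] using horth l k) l

section Weights

variable {ι : Type*} [DecidableEq ι] {s : Finset ι} {v : ι → ℝ} {i : ι}

theorem laguerreFunctional_mul_basis (hp : IsOrthogonalPoly (laguerreFunctional ha) p)
    (hroots : EnumeratesRoots p s v) (hi : i ∈ s) (hpdeg : p.degree = (M + 1 : ℕ))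
    (hr : r.degree ≤ M) :
    laguerreFunctional (neg_one_lt_add_one ha) (r * Lagrange.basis s v i) =
      v i * r.eval (v i) * laguerreFunctional ha (Lagrange.basis s v i) := by
  have hXr : (X * r).degree ≤ (#s : WithBot ℕ) := by
    rw [← hroots.degree_eq, hpdeg, degree_mul, degree_X, Nat.cast_succ, add_comm]
    gcongr
  rw [← laguerreFunctional_X_mul ha, ← mul_assoc, hp.apply_mul_basis hroots hi hXr, eval_mul,
    eval_X]

theorem mul_eval_derivative_mul_laguerreFunctional_basis
    (hp : IsOrthonormalPoly (laguerreFunctional ha) p) (hroots : EnumeratesRoots p s v)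
    (hi : i ∈ s) (hpdeg : p.degree = (M + 1 : ℕ)) :
    v i * (derivative p).eval (v i) * laguerreFunctional ha (Lagrange.basis s v i) =
      (Lagrange.basis s v i).leadingCoeff / p.leadingCoeff := by
  have hbasis := hroots.degree_basis hi hpdeg
  rw [← laguerreFunctional_mul_basis hp.toIsOrthogonalPoly hroots hi hpdeg
      (degree_derivative_le_of_degree_eq_succ hpdeg),
    laguerreFunctional_derivative_mul hp hpdeg hbasis.le,
    ← coeff_natDegree (p := Lagrange.basis s v i), natDegree_eq_of_degree_eq_some hbasis]

theorem mul_eval_mul_laguerreFunctional_basis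
    (hp : IsOrthogonalPoly (laguerreFunctional ha) p) (hroots : EnumeratesRoots p s v)
    (hi : i ∈ s) (hpdeg : p.degree = (M + 1 : ℕ))
    (hq : IsOrthonormalPoly (laguerreFunctional (neg_one_lt_add_one ha)) q) (hqdeg : q.degree = M) :
    v i * q.eval (v i) * laguerreFunctional ha (Lagrange.basis s v i) =
      (Lagrange.basis s v i).leadingCoeff / q.leadingCoeff := by
  have hbasis := hroots.degree_basis hi hpdeg
  rw [← laguerreFunctional_mul_basis hp hroots hi hpdeg hqdeg.le,
    hq.apply_mul_eq_coeff_div (hbasis.trans hqdeg.symm).le,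
    ← coeff_natDegree (p := Lagrange.basis s v i), natDegree_eq_of_degree_eq_some hbasis,
    natDegree_eq_of_degree_eq_some hqdeg]

theorem laguerreFunctional_basis (hp : IsOrthonormalPoly (laguerreFunctional ha) p)
    (hroots : EnumeratesRoots p s v) (hi : i ∈ s) (hpdeg : p.degree = (M + 1 : ℕ))
    (hq : IsOrthonormalPoly (laguerreFunctional (neg_one_lt_add_one ha)) q) (hqdeg : q.degree = M) :
    laguerreFunctional ha (Lagrange.basis s v i) =
      (M + 1 : ℝ)⁻¹ * ((v i)⁻¹ * (q.eval (v i) ^ 2)⁻¹) := by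
  have hA : p.leadingCoeff ≠ 0 := leadingCoeff_ne_zero.mpr hp.ne_zero
  have hB : q.leadingCoeff ≠ 0 := leadingCoeff_ne_zero.mpr hq.ne_zero
  have hBA := sq_leadingCoeff_of_isOrthonormalPoly_laguerreFunctional hp hpdeg hq hqdeg
  have hbd := hroots.leadingCoeff_basis_mul_eval_derivative hi
  have hd := mul_eval_derivative_mul_laguerreFunctional_basis hp hroots hi hpdeg
  have hqv := mul_eval_mul_laguerreFunctional_basis hp.toIsOrthogonalPoly hroots hi hpdeg hq hqdeg
  set b := (Lagrange.basis s v i).leadingCoeff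
  set d := (derivative p).eval (v i)
  set w := laguerreFunctional ha (Lagrange.basis s v i)
  rw [eq_div_iff hA] at hd
  rw [eq_div_iff hB] at hqv
  have hone : w * (v i * d ^ 2) = 1 :=
    mul_right_cancel₀ hA (by linear_combination d * hd + hbd)
  have hratio : q.leadingCoeff * q.eval (v i) = p.leadingCoeff * d := by
    have hvw : v i * w ≠ 0 := fun h => one_ne_zero (by rw [← hone]; linear_combination d ^ 2 * h)
    exact mul_left_cancel₀ hvw (by linear_combination hqv - hd)
  have hsq : d ^ 2 = (M + 1) * q.eval (v i) ^ 2 :=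
    mul_left_cancel₀ (pow_ne_zero 2 hA)
      (by linear_combination (-1 : ℝ) * congrArg (· ^ 2) hratio + q.eval (v i) ^ 2 * hBA)
  rw [eq_inv_of_mul_eq_one_left hone, hsq, mul_inv, mul_inv]
  ring

end Weights

theorem laguerreFunctional_eq_sum {ι : Type*} {s : Finset ι} {v : ι → ℝ}
    (hp : IsOrthonormalPoly (laguerreFunctional ha) p)
    (hroots : EnumeratesRoots p s v) (hpdeg : p.degree = (M + 1 : ℕ))
    (hq : IsOrthonormalPoly (laguerreFunctional (neg_one_lt_add_one ha)) q) (hqdeg : q.degree = M)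
    {f : ℝ[X]} (hf : f.degree < (2 * (M + 1) : ℕ)) :
    laguerreFunctional ha f =
      ∑ i ∈ s, f.eval (v i) * ((M + 1 : ℝ)⁻¹ * ((v i)⁻¹ * (q.eval (v i) ^ 2)⁻¹)) := by
  classical
  have hcard : #s = M + 1 := by exact_mod_cast hroots.degree_eq.symm.trans hpdeg
  rw [hp.apply_eq_sum_eval_mul_basis hroots (hcard ▸ hf)]
  exact Finset.sum_congr rfl fun i hi => by
    rw [laguerreFunctional_basis hp hroots hi hpdeg hq hqdeg]

end Laguerre

section ProductCubature

open MvPolynomial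

variable {ι : Type*} {R : Type*} [CommSemiring R] {d e : ℕ}

theorem mul_mem_restrictDegree {P Q : MvPolynomial ι R} (hP : P ∈ restrictDegree ι R d)
    (hQ : Q ∈ restrictDegree ι R e) : P * Q ∈ restrictDegree ι R (d + e) := by
  classical
  rw [mem_restrictDegree_iff_sup] at *
  exact fun i => (degreeOf_mul_le i P Q).trans (add_le_add (hP i) (hQ i))

theorem prod_X_pow_mem_restrictDegree [Fintype ι] {k : ι → ℕ} (hk : ∀ i, k i ≤ d) :
    ∏ i, (X i : MvPolynomial ι R) ^ k i ∈ restrictDegree ι R d := by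
  have hmonomial : ∏ i, (X i : MvPolynomial ι R) ^ k i =
      monomial (Finsupp.equivFunOnFinite.symm k) 1 := by
    rw [monomial_eq, Finsupp.prod_fintype _ _ fun _ => pow_zero _]
    simp
  rw [hmonomial, mem_restrictDegree]
  intro l hl i
  rw [Finset.mem_singleton.mp (support_monomial_subset hl)]
  exact hk i

variable [Fintype ι] [DecidableEq ι] {κ : Type*} {μ : Measure ℝ} [SigmaFinite μ] {w : ℝ → ℝ}
  {s : Finset κ} {v c : κ → ℝ} {P : MvPolynomial ι ℝ}

theorem integral_pi_eval_mul_prod_eq_sum (hint : ∀ k ≤ d, Integrable (fun x => x ^ k * w x) μ)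
    (hquad : ∀ k ≤ d, ∫ x, x ^ k * w x ∂μ = ∑ i ∈ s, v i ^ k * c i)
    (hP : P ∈ restrictDegree ι ℝ d) :
    ∫ x, eval x P * ∏ j, w (x j) ∂(Measure.pi fun _ => μ) =
      ∑ k ∈ Fintype.piFinset fun _ : ι => s, eval (v ∘ k) P * ∏ j, c (k j) := by
  rw [mem_restrictDegree] at hP
  have hmonomial (x : ι → ℝ) (W : ι → ℝ) : eval x P * ∏ j, W j =
      ∑ k ∈ P.support, P.coeff k * ∏ j, x j ^ k j * W j := by
    simp only [eval_eq', Finset.sum_mul, mul_assoc, Finset.prod_mul_distrib]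
  simp only [hmonomial, Function.comp_apply]
  rw [integral_finsetSum, Finset.sum_comm]
  · refine Finset.sum_congr rfl fun k hk => ?_
    rw [integral_const_mul, ← Finset.mul_sum,
      integral_fintype_prod_eq_prod fun j x => x ^ k j * w x,
      ← Finset.prod_univ_sum (fun _ => s) fun j i => v i ^ k j * c i]
    simp only [hquad _ (hP k hk _)]
  · exact fun k hk => (Integrable.fintype_prod (f := fun j x => x ^ k j * w x)
      fun j => hint _ (hP k hk j)).const_mul _

end ProductCubature
section SymmetricPolynomials

open MvPolynomial

variable {n d : ℕ}

theorem det_vandermonde_X_mem_restrictDegree (R : Type*) [CommRing R] (n : ℕ) :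
    (Matrix.vandermonde (X : Fin n → MvPolynomial (Fin n) R)).det ∈
      restrictDegree (Fin n) R (n - 1) := by
  rw [Matrix.det_apply]
  refine sum_mem fun σ _ => ?_
  have hprod : ∏ i, Matrix.vandermonde (X : Fin n → MvPolynomial (Fin n) R) (σ i) i =
      ∏ j, X j ^ (σ.symm j : ℕ) :=
    Fintype.prod_equiv σ _ _ fun i => by rw [Matrix.vandermonde_apply, σ.symm_apply_apply]
  rw [hprod, Units.smul_def]
  exact zsmul_mem (prod_X_pow_mem_restrictDegree fun j => Nat.le_sub_one_of_lt (σ.symm j).isLt) _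

theorem eval_det_vandermonde_X {R : Type*} [CommRing R] (x : Fin n → R) :
    eval x (Matrix.vandermonde (X : Fin n → MvPolynomial (Fin n) R)).det =
      (Matrix.vandermonde x).det := by
  rw [RingHom.map_det]
  congr 1
  ext i j
  simp [Matrix.vandermonde_apply]

theorem vand_sq (x : Fin n → ℝ) : vand n x ^ 2 = (Matrix.vandermonde x).det ^ 2 := by
  rw [Matrix.det_vandermonde, vand, ← Finset.prod_pow, ← Finset.prod_pow]
  refine Finset.prod_congr rfl fun i _ => ?_
  rw [← Finset.prod_pow, ← Finset.prod_pow]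
  refine Finset.prod_congr (by ext; simp) fun j _ => by ring

theorem vand_sq_comp_perm (x : Fin n → ℝ) (σ : Equiv.Perm (Fin n)) :
    vand n (x ∘ σ) ^ 2 = vand n x ^ 2 := by
  have hsubmatrix : Matrix.vandermonde (x ∘ σ) = (Matrix.vandermonde x).submatrix σ id := rfl
  have hsign : ((Equiv.Perm.sign σ : ℤ) : ℝ) ^ 2 = 1 := by
    norm_cast
    simp
  rw [vand_sq, vand_sq, hsubmatrix, Matrix.det_permute, mul_pow, hsign, one_mul]

theorem vand_sq_eq_zero_of_not_injective {x : Fin n → ℝ} (hx : ¬ Function.Injective x) :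
    vand n x ^ 2 = 0 := by
  rw [vand_sq, sq_eq_zero_iff]
  by_contra h
  exact hx (Matrix.det_vandermonde_ne_zero_iff.mp h)

theorem msym_comp_perm (lam : Fin n → ℕ) (x : Fin n → ℝ) (σ : Equiv.Perm (Fin n)) :
    msym n lam (x ∘ σ) = msym n lam x := by
  have hmem {mu : Fin n → ℕ} (τ : Equiv.Perm (Fin n))
      (hmu : mu ∈ univ.image fun ρ : Equiv.Perm (Fin n) => lam ∘ ρ) :
      mu ∘ τ ∈ univ.image fun ρ : Equiv.Perm (Fin n) => lam ∘ ρ := by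
    obtain ⟨ρ, -, rfl⟩ := Finset.mem_image.mp hmu
    exact Finset.mem_image.mpr ⟨ρ * τ, Finset.mem_univ _, rfl⟩
  refine Finset.sum_nbij' (· ∘ σ.symm) (· ∘ σ) (fun _ => hmem σ.symm) (fun _ => hmem σ)
    (fun mu _ => ?_) (fun mu _ => ?_) fun mu _ => ?_
  · simp [Function.comp_assoc]
  · simp [Function.comp_assoc]
  · exact Fintype.prod_equiv σ _ _ fun i => by simp

theorem apply_comp_perm_of_mem_pSpace {f : (Fin n → ℝ) → ℝ} (hf : f ∈ pSpace d n)
    (x : Fin n → ℝ) (σ : Equiv.Perm (Fin n)) : f (x ∘ σ) = f x := by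
  induction hf using Submodule.span_induction with
  | mem g hg =>
    obtain ⟨lam, -, rfl⟩ := hg
    exact msym_comp_perm lam x σ
  | zero => rfl
  | add g h _ _ hg hh => simp only [Pi.add_apply, hg, hh]
  | smul c g _ hg => simp only [Pi.smul_apply, hg]

theorem mem_Lam {lh : Fin n → ℕ} : lh ∈ Lam d n ↔ (∀ i, lh i ≤ d) ∧ Antitone lh := by
  rw [Lam, Finset.mem_filter, Fintype.mem_piFinset]
  simp only [Finset.mem_range, Nat.lt_succ_iff, Antitone]

theorem pSpace_le_map_evalₗ (d n : ℕ) :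
    pSpace d n ≤ (restrictDegree (Fin n) ℝ d).map (evalₗ ℝ (Fin n)) := by
  rw [pSpace, Submodule.span_le]
  rintro _ ⟨lam, hlam, rfl⟩
  refine ⟨∑ mu ∈ univ.image fun σ : Equiv.Perm (Fin n) => lam ∘ σ, ∏ j, X j ^ mu j,
    sum_mem fun mu hmu => ?_, by ext x; simp [msym, evalₗ_apply]⟩
  obtain ⟨σ, -, rfl⟩ := Finset.mem_image.mp hmu
  exact prod_X_pow_mem_restrictDegree fun j => (mem_Lam.mp hlam).1 (σ j)

theorem exists_eval_eq_mul_vand_sq {f : (Fin n → ℝ) → ℝ} (hf : f ∈ pSpace d n) :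
    ∃ P ∈ restrictDegree (Fin n) ℝ (d + 2 * (n - 1)), ∀ x, eval x P = f x * vand n x ^ 2 := by
  obtain ⟨Q, hQ, rfl⟩ := pSpace_le_map_evalₗ d n hf
  have hdet := det_vandermonde_X_mem_restrictDegree ℝ n
  refine ⟨_, mul_mem_restrictDegree hQ (two_mul (n - 1) ▸ mul_mem_restrictDegree hdet hdet),
    fun x => ?_⟩
  rw [eval_mul, eval_mul, eval_det_vandermonde_X, evalₗ_apply, vand_sq, sq]

end SymmetricPolynomials

section StrictlyDecreasingIndices

variable {n : ℕ} {M : Type*} [AddCommMonoid M]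

theorem sum_piFinset_comp_perm {ι κ : Type*} [Fintype ι] [DecidableEq ι] (G : (ι → κ) → M)
    (s : Finset κ) (σ : Equiv.Perm ι) :
    ∑ k ∈ Fintype.piFinset fun _ => s, G (k ∘ σ) = ∑ k ∈ Fintype.piFinset fun _ => s, G k :=
  Finset.sum_equiv (σ.symm.arrowCongr (Equiv.refl κ))
    (fun k => by simp [Fintype.mem_piFinset, σ.forall_congr_right (q := fun i => k i ∈ s)])
    fun k _ => rfl

section LinearOrder

variable {κ : Type*} [LinearOrder κ]

theorem existsUnique_perm_strictAnti_comp {k : Fin n → κ} (hk : Function.Injective k) :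
    ∃! σ : Equiv.Perm (Fin n), StrictAnti (k ∘ σ) := by
  refine ⟨Tuple.sort (OrderDual.toDual ∘ k), ?_, fun τ hτ => Equiv.ext fun i => hk ?_⟩
  · exact Antitone.strictAnti_of_injective (Tuple.monotone_sort (OrderDual.toDual ∘ k))
      (hk.comp (Equiv.injective _))
  · exact congrFun (Tuple.unique_antitone hτ.antitone
      (Tuple.monotone_sort (OrderDual.toDual ∘ k) : Antitone (k ∘ _))) i

open scoped Classical in
theorem sum_piFinset_eq_factorial_nsmul_sum_strictAnti {G : (Fin n → κ) → M}
    (hsymm : ∀ k (σ : Equiv.Perm (Fin n)), G (k ∘ σ) = G k)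
    (hzero : ∀ k, ¬ Function.Injective k → G k = 0) (s : Finset κ) :
    ∑ k ∈ Fintype.piFinset fun _ => s, G k =
      n.factorial • ∑ k ∈ Fintype.piFinset fun _ => s with StrictAnti k, G k := by
  have hsort (k : Fin n → κ) :
      ∑ σ : Equiv.Perm (Fin n), (if StrictAnti (k ∘ σ) then G (k ∘ σ) else 0) = G k := by
    simp only [hsymm]
    by_cases hk : Function.Injective k
    · obtain ⟨τ, hτ, huniq⟩ := existsUnique_perm_strictAnti_comp hk
      rw [Finset.sum_eq_single τ (fun σ _ hσ => if_neg fun h => hσ (huniq σ h)) (by simp),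
        if_pos hτ]
    · simp only [hzero k hk, ite_self, Finset.sum_const_zero]
  calc ∑ k ∈ Fintype.piFinset fun _ => s, G k
      = ∑ σ : Equiv.Perm (Fin n), ∑ k ∈ Fintype.piFinset fun _ => s,
          (if StrictAnti (k ∘ σ) then G (k ∘ σ) else 0) := by
        rw [Finset.sum_comm]
        simp only [hsort]
    _ = ∑ _σ : Equiv.Perm (Fin n), ∑ k ∈ Fintype.piFinset fun _ => s with StrictAnti k, G k := by
        simp only [sum_piFinset_comp_perm (fun k => if StrictAnti k then G k else 0),
          Finset.sum_filter]
    _ = n.factorial • ∑ k ∈ Fintype.piFinset fun _ => s with StrictAnti k, G k := by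
        rw [Finset.sum_const, Finset.card_univ, Fintype.card_perm, Fintype.card_fin]

end LinearOrder

/-- The strictly decreasing sequence `λ + δ`, where `δ = (n - 1, …, 1, 0)`: it indexes the
components of `node`. -/
def addStaircase (n : ℕ) (lh : Fin n → ℕ) (j : Fin n) : ℕ :=
  lh j + (n - 1 - j)

theorem strictAnti_addStaircase {lh : Fin n → ℕ} (hlh : Antitone lh) :
    StrictAnti (addStaircase n lh) := by
  intro i j hij
  have hle := hlh hij.le
  simp only [addStaircase]
  omega

theorem antitone_add_val_of_strictAnti {k : Fin n → ℕ} (hk : StrictAnti k) :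
    Antitone fun i => k i + i := by
  cases n with
  | zero => exact Subsingleton.antitone _
  | succ n =>
    refine Fin.antitone_iff_succ_le.mpr fun i => ?_
    have hlt := hk i.castSucc_lt_succ
    simp only [Fin.val_succ, Fin.val_castSucc]
    omega

theorem le_add_val_of_strictAnti {k : Fin n → ℕ} (hk : StrictAnti k) (i : Fin n) :
    n - 1 ≤ k i + i := by
  have hi := i.isLt
  have hlast := antitone_add_val_of_strictAnti hk
    (show i ≤ ⟨n - 1, by omega⟩ from Fin.mk_le_mk.mpr (by omega))
  simp only at hlast
  omega

theorem add_val_lt_of_strictAnti {k : Fin n → ℕ} (hk : StrictAnti k) {N : ℕ} (hN : ∀ i, k i < N)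
    (i : Fin n) : k i + i < N := by
  have hi := i.isLt
  have hfirst := antitone_add_val_of_strictAnti hk
    (show ⟨0, by omega⟩ ≤ i from Fin.mk_le_mk.mpr (by omega))
  have hN0 := hN ⟨0, by omega⟩
  simp only at hfirst
  omega

open scoped Classical in
theorem sum_strictAnti_eq_sum_Lam (m : ℕ) (G : (Fin n → ℕ) → M) :
    ∑ k ∈ Fintype.piFinset fun _ => range (m + n) with StrictAnti k, G k =
      ∑ lh ∈ Lam m n, G (addStaircase n lh) := by
  symm
  refine Finset.sum_nbij' (addStaircase n) (fun k j => k j + j - (n - 1)) ?_ ?_ ?_ ?_ fun _ _ => rfl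
  · intro lh hlh
    simp only [Finset.mem_filter, Fintype.mem_piFinset, Finset.mem_range]
    refine ⟨fun j => ?_, strictAnti_addStaircase (mem_Lam.mp hlh).2⟩
    have hle := (mem_Lam.mp hlh).1 j
    simp only [addStaircase]
    omega
  · intro k hk
    simp only [Finset.mem_filter, Fintype.mem_piFinset, Finset.mem_range] at hk
    refine mem_Lam.mpr ⟨fun j => ?_, fun i j hij => ?_⟩
    · have hlt := add_val_lt_of_strictAnti hk.2 hk.1 j
      omega
    · exact Nat.sub_le_sub_right (antitone_add_val_of_strictAnti hk.2 hij) _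
  · intro lh _
    ext j
    simp only [addStaircase]
    omega
  · intro k hk
    ext j
    have hle := le_add_val_of_strictAnti (Finset.mem_filter.mp hk).2 j
    simp only [addStaircase]
    omega

end StrictlyDecreasingIndices

section SymmetricCubature

variable {d m n : ℕ} {μ : Measure ℝ} [SigmaFinite μ] {w : ℝ → ℝ} {v c : ℕ → ℝ}
  {f : (Fin n → ℝ) → ℝ}

theorem integral_pi_mul_vand_sq_eq_sum_Lam
    (hint : ∀ k ≤ d + 2 * (n - 1), Integrable (fun x => x ^ k * w x) μ)
    (hquad : ∀ k ≤ d + 2 * (n - 1), ∫ x, x ^ k * w x ∂μ = ∑ i ∈ range (m + n), v i ^ k * c i)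
    (hf : f ∈ pSpace d n) :
    ∫ x, f x * (∏ j, w (x j)) * vand n x ^ 2 ∂(Measure.pi fun _ => μ) =
      n.factorial * ∑ lh ∈ Lam m n,
        f (node n v lh) * (∏ j, c (addStaircase n lh j)) * vand n (node n v lh) ^ 2 := by
  obtain ⟨P, hP, heval⟩ := exists_eval_eq_mul_vand_sq hf
  let G (k : Fin n → ℕ) : ℝ := f (v ∘ k) * (∏ j, c (k j)) * vand n (v ∘ k) ^ 2
  have hsymm (k : Fin n → ℕ) (σ : Equiv.Perm (Fin n)) : G (k ∘ σ) = G k := by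
    simp only [G, ← Function.comp_assoc, apply_comp_perm_of_mem_pSpace hf, vand_sq_comp_perm]
    simp only [Function.comp_apply, Equiv.prod_comp σ fun j => c (k j)]
  have hzero (k : Fin n → ℕ) (hk : ¬ Function.Injective k) : G k = 0 := by
    simp only [G, vand_sq_eq_zero_of_not_injective fun h => hk h.of_comp, mul_zero]
  calc ∫ x, f x * (∏ j, w (x j)) * vand n x ^ 2 ∂(Measure.pi fun _ => μ)
      = ∫ x, MvPolynomial.eval x P * ∏ j, w (x j) ∂(Measure.pi fun _ => μ) := by
        simp only [heval, mul_right_comm]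
    _ = ∑ k ∈ Fintype.piFinset fun _ => range (m + n), G k := by
        rw [integral_pi_eval_mul_prod_eq_sum hint hquad hP]
        simp only [heval, mul_right_comm, G]
    _ = n.factorial * ∑ lh ∈ Lam m n, G (addStaircase n lh) := by
        rw [sum_piFinset_eq_factorial_nsmul_sum_strictAnti hsymm hzero, sum_strictAnti_eq_sum_Lam,
          nsmul_eq_mul]

end SymmetricCubature

theorem gauss_laguerre_cubature_LUE
    (n : ℕ) (hn : 0 < n) (m : ℕ)
    (α : ℝ) (hα : -1 < α)
    -- the normalized Laguerre polynomials ℓ^{(α)}: orthonormal w.r.t. x^α e^{-x} on (0,∞)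
    (p : ℕ → Polynomial ℝ)
    (hdeg : ∀ l, (p l).degree = l)
    (hlead : ∀ l, 0 < (p l).leadingCoeff)
    (horth : ∀ l k, (∫ x in Set.Ioi (0 : ℝ),
        (p l).eval x * (p k).eval x * (x ^ α * Real.exp (-x)))
      = if l = k then 1 else 0)
    -- the normalized Laguerre polynomials ℓ^{(α+1)}: orthonormal w.r.t. x^{α+1} e^{-x} on (0,∞)
    (q : ℕ → Polynomial ℝ)
    (hqdeg : ∀ l, (q l).degree = l)
    (hqlead : ∀ l, 0 < (q l).leadingCoeff)
    (hqorth : ∀ l k, (∫ x in Set.Ioi (0 : ℝ),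
        (q l).eval x * (q k).eval x * (x ^ (α + 1) * Real.exp (-x)))
      = if l = k then 1 else 0)
    -- the ordered roots of ℓ^{(α)}_{m+n} in (0,∞)
    (xr : ℕ → ℝ)
    (hxr_mem : ∀ l < m + n, xr l ∈ Set.Ioi (0 : ℝ))
    (hxr_mono : ∀ k l : ℕ, k < l → l < m + n → xr k < xr l)
    (hxr_root : ∀ l < m + n, (p (m + n)).eval (xr l) = 0)
    -- a symmetric polynomial of degree at most 2m+1 in each variable
    (f : (Fin n → ℝ) → ℝ)
    (hf : f ∈ pSpace (2 * m + 1) n) :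
    (1 / (n.factorial : ℝ)) *
      (∫ x : Fin n → ℝ in Set.univ.pi (fun _ => Set.Ioi (0 : ℝ)),
        f x * (∏ j, (x j) ^ α * Real.exp (-(x j))) * vand n x ^ 2)
    = ∑ lh ∈ Lam m n,
        f (node n xr lh) *
          ((((m : ℝ) + n) ^ n)⁻¹ *
            (∏ j : Fin n, (xr (lh j + (n - 1 - (j : ℕ))))⁻¹ *
              (((q (m + n - 1)).eval (xr (lh j + (n - 1 - (j : ℕ))))) ^ 2)⁻¹) *
            vand n (node n xr lh) ^ 2) := by
  obtain ⟨M, hM⟩ : ∃ M, m + n = M + 1 := Nat.exists_eq_succ_of_ne_zero (by omega)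
  have hMcast : (m : ℝ) + n = M + 1 := by exact_mod_cast hM
  have hroots : EnumeratesRoots (p (m + n)) (range (m + n)) xr :=
    { injOn := StrictMonoOn.injOn fun k _ l hl hkl => hxr_mono k l hkl (Finset.mem_range.mp hl)
      degree_eq := by rw [hdeg, Finset.card_range]
      eval_eq_zero := fun l hl => hxr_root l (Finset.mem_range.mp hl) }
  have hp := isOrthonormalPoly_laguerreFunctional_of_sequence hα hdeg horth (m + n)
  have hq := isOrthonormalPoly_laguerreFunctional_of_sequence (neg_one_lt_add_one hα) hqdeg hqorth M
  have hquad (k : ℕ) (hk : k ≤ 2 * m + 1 + 2 * (n - 1)) :=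
    laguerreFunctional_eq_sum hp hroots (hM ▸ hdeg (m + n)) hq (hqdeg M)
      (f := Polynomial.X ^ k) (by rw [Polynomial.degree_X_pow]; exact_mod_cast (by omega))
  simp only [laguerreFunctional_apply, Polynomial.eval_pow, Polynomial.eval_X] at hquad
  have hcubature := integral_pi_mul_vand_sq_eq_sum_Lam
    (fun k _ => integrableOn_pow_mul_laguerreWeight hα k) hquad hf
  rw [volume_pi, Measure.restrict_pi_pi]
  simp only [laguerreWeight] at hcubature
  rw [hcubature, one_div_mul_eq_div, mul_div_cancel_left₀ _ (by positivity)]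
  refine Finset.sum_congr rfl fun lh _ => ?_
  simp only [addStaircase, hMcast, hM, Nat.add_sub_cancel, Finset.prod_mul_distrib,
    Finset.prod_const, Finset.card_univ, Fintype.card_fin, inv_pow]
  ring

end
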